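/- The set L of processes expressible as a difference of two supermartingales (equivalently, the sum of a supermartingale and a submartingale) is a Riesz space under the pointwise order: it is a vector space closed under pointwise minimum. -/

import Mathlib

open MeasureTheory Filter

/-- `X` is a difference of two supermartingales (equivalently, the sum of a
supermartingale and a submartingale). -/
def IsDiffSupermartingale {Ω : Type*} {m : MeasurableSpace Ω}
    (ℱ : MeasureTheory.Filtration ℕ m) (μ : MeasureTheory.Measure Ω)
    (X : ℕ → Ω → ℝ) : Prop :=
  ∃ A B : ℕ → Ω → ℝ, MeasureTheory.Supermartingale A ℱ μ ∧
    MeasureTheory.Supermartingale B ℱ μ ∧ X = A - B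

/-- The differences of supermartingales form a vector space closed under pointwise
minimum, hence a Riesz space under the pointwise order. -/
theorem isDiffSupermartingale_add_smul_inf
    {Ω : Type*} {m : MeasurableSpace Ω} {μ : Measure Ω} [IsProbabilityMeasure μ]
    {ℱ : Filtration ℕ m} {X Y : ℕ → Ω → ℝ}
    (hX : IsDiffSupermartingale ℱ μ X) (hY : IsDiffSupermartingale ℱ μ Y) :
    IsDiffSupermartingale ℱ μ (X + Y) ∧
      (∀ c : ℝ, IsDiffSupermartingale ℱ μ (c • X)) ∧
      IsDiffSupermartingale ℱ μ (X ⊓ Y) := by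
  obtain ⟨A, B, hA, hB, rfl⟩ := hX
  obtain ⟨C, D, hC, hD, rfl⟩ := hY
  refine ⟨⟨A + C, B + D, hA.add hC, hB.add hD, by abel⟩, fun c => ?_, ?_⟩
  · rcases le_total 0 c with hc | hc
    · exact ⟨c • A, c • B, hA.smul_nonneg hc, hB.smul_nonneg hc, smul_sub _ _ _⟩
    · refine ⟨(-c) • B, (-c) • A, hB.smul_nonneg (neg_nonneg.2 hc),
        hA.smul_nonneg (neg_nonneg.2 hc), ?_⟩
      ext n ω
      simp only [Pi.smul_apply, Pi.sub_apply, smul_eq_mul]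
      ring
  · have h := ((hA.add hD).neg.sup (hC.add hB).neg).neg
    refine ⟨_, B + D, h, hB.add hD, ?_⟩
    ext n ω
    simp only [Pi.inf_apply, Pi.sub_apply, Pi.neg_apply, Pi.sup_apply, Pi.add_apply]
    rw [← neg_inf, neg_neg, ← min_sub_sub_right]
    congr 1 <;> ring
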